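/- Let 𝔤 be a finite-dimensional complex Lie algebra, let g ∈ S(𝔤) be a semi-invariant with weight χ ∈ 𝔤*, and let a ∈ 𝔤*. Let U ⊆ 𝔤* be open and let λ: U → ℂ be an analytic function satisfying g(x − λ(x)a) = 0 for all x ∈ U. Let x₀ ∈ U be a point at which ⟨a, dg(x₀ − λ(x₀)a)⟩ ≠ 0. Then dλ(x₀) lies in the kernel of the skew-symmetric bilinear form 𝒜_{x₀} − λ(x₀)𝒜_a on 𝔤, i.e. ⟨x₀ − λ(x₀)a, [dλ(x₀), η]⟩ = 0 for every η ∈ 𝔤. -/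

import Mathlib

/-- A function on the dual space `𝔤* ≅ L →L[ℂ] ℂ` is a polynomial function
(i.e. corresponds to an element of the symmetric algebra `S(𝔤)`) if it lies in the
`ℂ`-subalgebra of functions generated by the evaluations `x ↦ ⟨x, ξ⟩`, `ξ ∈ 𝔤`. -/
def IsPolyFun (L : Type*) [NormedAddCommGroup L] [NormedSpace ℂ L]
    (p : (L →L[ℂ] ℂ) → ℂ) : Prop :=
  p ∈ Algebra.adjoin ℂ (Set.range fun ξ : L => fun x : L →L[ℂ] ℂ => x ξ)

/-- `dp` represents the differential of `p : 𝔤* → ℂ`, with `dp x ∈ 𝔤` identified with a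
linear functional on `𝔤*` via the canonical isomorphism `𝔤 ≅ 𝔤**`:
`(fderiv ℂ p x) v = ⟨v, dp x⟩` for all `v ∈ 𝔤*`. -/
def RepDeriv (L : Type*) [NormedAddCommGroup L] [NormedSpace ℂ L]
    (p : (L →L[ℂ] ℂ) → ℂ) (dp : (L →L[ℂ] ℂ) → L) : Prop :=
  ∀ x v : L →L[ℂ] ℂ, fderiv ℂ p x v = v (dp x)

/-- The bilinear map `B` is a Lie bracket on the complex vector space `L` (which carries a
norm only in order to speak about differentials and analyticity; in finite dimension all
norms are equivalent): `B` is alternating and satisfies the Jacobi identity. -/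
def IsLieBracket (L : Type*) [NormedAddCommGroup L] [NormedSpace ℂ L]
    (B : L →ₗ[ℂ] L →ₗ[ℂ] L) : Prop :=
  (∀ ξ : L, B ξ ξ = 0) ∧
    ∀ ξ η ζ : L, B ξ (B η ζ) = B (B ξ η) ζ + B η (B ξ ζ)

/-- `g ∈ S(𝔤)` is a semi-invariant with weight `χ ∈ 𝔤*`:
`⟨x, [ξ, dg(x)]⟩ = χ(ξ) · g(x)` for all `ξ ∈ 𝔤`, `x ∈ 𝔤*`. -/
def IsSemiInvariant (L : Type*) [NormedAddCommGroup L] [NormedSpace ℂ L]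
    (B : L →ₗ[ℂ] L →ₗ[ℂ] L) (g : (L →L[ℂ] ℂ) → ℂ) (χ : L →L[ℂ] ℂ) : Prop :=
  IsPolyFun L g ∧ g ≠ 0 ∧
    ∃ dg : (L →L[ℂ] ℂ) → L, RepDeriv L g dg ∧
      ∀ (ξ : L) (x : L →L[ℂ] ℂ), x (B ξ (dg x)) = χ ξ * g x

/-!
Put `y = x₀ - λ(x₀)a`. Differentiating `g(x - λ(x)a) = 0` at `x₀` gives `dg(y) = ⟨a, dg(y)⟩ dλ(x₀)`.
Semi-invariance and `g(y) = 0` put `dg(y)` in the kernel of `𝒜_y`, and dividing by `⟨a, dg(y)⟩ ≠ 0`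
shows that `dλ(x₀)` lies there too.
-/

open Filter Topology

theorem IsPolyFun.differentiable {L : Type*} [NormedAddCommGroup L] [NormedSpace ℂ L]
    {p : (L →L[ℂ] ℂ) → ℂ} (hp : IsPolyFun L p) : Differentiable ℂ p := by
  induction hp using Algebra.adjoin_induction with
  | mem f hf =>
    obtain ⟨ξ, rfl⟩ := hf
    exact (ContinuousLinearMap.apply ℂ ℂ ξ).differentiable
  | algebraMap r => exact differentiable_const r
  | add f h _ _ hf hh => exact hf.add hh
  | mul f h _ _ hf hh => exact hf.mul hh

theorem hasFDerivAt_eq_smulRight_of_root {𝕜 E F : Type*} [NontriviallyNormedField 𝕜]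
    [NormedAddCommGroup E] [NormedSpace 𝕜 E] [NormedAddCommGroup F] [NormedSpace 𝕜 F]
    {g : E → F} {g' : E →L[𝕜] F} {lam : E → 𝕜} {lam' : E →L[𝕜] 𝕜} {a x : E}
    (hg : HasFDerivAt g g' (x - lam x • a)) (hlam : HasFDerivAt lam lam' x)
    (hroot : ∀ᶠ y in 𝓝 x, g (y - lam y • a) = 0) :
    g' = lam'.smulRight (g' a) := by
  have hcomp : HasFDerivAt (fun y ↦ g (y - lam y • a))
      (g' ∘L (ContinuousLinearMap.id 𝕜 E - lam'.smulRight a)) x :=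
    hg.comp x ((hasFDerivAt_id x).sub (hlam.smul_const a))
  have hzero : g' ∘L (ContinuousLinearMap.id 𝕜 E - lam'.smulRight a) = 0 :=
    hcomp.unique ((hasFDerivAt_const (0 : F) x).congr_of_eventuallyEq hroot)
  ext v
  simpa [sub_eq_zero] using DFunLike.congr_fun hzero v

section Dual

variable {𝕜 L : Type*} [NontriviallyNormedField 𝕜] [NormedAddCommGroup L] [NormedSpace 𝕜 L]

theorem hasFDerivAt_apply_of_fderiv_eq {f : (L →L[𝕜] 𝕜) → 𝕜} {x : L →L[𝕜] 𝕜} {ξ : L}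
    (hf : DifferentiableAt 𝕜 f x) (hξ : ∀ v, fderiv 𝕜 f x v = v ξ) :
    HasFDerivAt f (ContinuousLinearMap.apply 𝕜 𝕜 ξ) x :=
  hf.hasFDerivAt.congr_fderiv (ContinuousLinearMap.ext hξ)

theorem eq_smul_of_hasFDerivAt_apply_of_root [SeparatingDual 𝕜 L]
    {g lam : (L →L[𝕜] 𝕜) → 𝕜} {a x : L →L[𝕜] 𝕜} {ξ dl : L}
    (hg : HasFDerivAt g (ContinuousLinearMap.apply 𝕜 𝕜 ξ) (x - lam x • a))
    (hlam : HasFDerivAt lam (ContinuousLinearMap.apply 𝕜 𝕜 dl) x)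
    (hroot : ∀ᶠ y in 𝓝 x, g (y - lam y • a) = 0) :
    ξ = a ξ • dl := by
  refine (SeparatingDual.eq_iff_forall_dual_eq (R := 𝕜)).2 fun v ↦ ?_
  have hv : v ξ = v dl * a ξ :=
    DFunLike.congr_fun (hasFDerivAt_eq_smulRight_of_root hg hlam hroot) v
  rw [hv, map_smul, smul_eq_mul, mul_comm]

/-- The bilinear form `𝒜_y(ξ, η) = ⟨y, [ξ, η]⟩` on `𝔤` attached to a point `y ∈ 𝔤*`, where the
bracket `B` may be any bilinear map. As `y ↦ 𝒜_y` is linear, the form `𝒜_x - λ 𝒜_a` is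
`bracketForm B (x - λ • a)`. -/
def bracketForm (B : L →ₗ[𝕜] L →ₗ[𝕜] L) (y : L →L[𝕜] 𝕜) : LinearMap.BilinForm 𝕜 L :=
  B.compr₂ y

theorem bracketForm_isAlt {B : L →ₗ[𝕜] L →ₗ[𝕜] L} (hB : B.IsAlt) (y : L →L[𝕜] 𝕜) :
    (bracketForm B y).IsAlt := fun ξ ↦ by
  rw [bracketForm, LinearMap.compr₂_apply, hB ξ, map_zero]

theorem mem_ker_bracketForm_of_forall_apply_eq_zero {B : L →ₗ[𝕜] L →ₗ[𝕜] L} (hB : B.IsAlt)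
    {y : L →L[𝕜] 𝕜} {ξ : L} (hξ : ∀ η, y (B η ξ) = 0) : ξ ∈ (bracketForm B y).ker :=
  LinearMap.ext fun η ↦ (bracketForm_isAlt hB y).isRefl η ξ (hξ η)

theorem root_of_semiInvariant_dl_in_kernel_general [SeparatingDual 𝕜 L]
    {B : L →ₗ[𝕜] L →ₗ[𝕜] L} (hB : B.IsAlt)
    {g lam : (L →L[𝕜] 𝕜) → 𝕜} {χ : L → 𝕜} {a x₀ : L →L[𝕜] 𝕜} {ξ dl : L}
    (hg : HasFDerivAt g (ContinuousLinearMap.apply 𝕜 𝕜 ξ) (x₀ - lam x₀ • a))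
    (hsemi : ∀ η, (x₀ - lam x₀ • a) (B η ξ) = χ η * g (x₀ - lam x₀ • a))
    (hlam : HasFDerivAt lam (ContinuousLinearMap.apply 𝕜 𝕜 dl) x₀)
    (hroot : ∀ᶠ x in 𝓝 x₀, g (x - lam x • a) = 0) (hnd : a ξ ≠ 0) :
    dl ∈ (bracketForm B (x₀ - lam x₀ • a)).ker := by
  have hξ : ξ ∈ (bracketForm B (x₀ - lam x₀ • a)).ker :=
    mem_ker_bracketForm_of_forall_apply_eq_zero hB fun η ↦ by
      rw [hsemi, hroot.self_of_nhds, mul_zero]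
  rw [eq_smul_of_hasFDerivAt_apply_of_root hg hlam hroot] at hξ
  exact (Submodule.smul_mem_iff _ hnd).1 hξ

end Dual

/-- Lemma on roots of semi-invariants, kernel form: if `λ : U → ℂ` is analytic with
`g(x − λ(x)a) = 0` on `U`, and `⟨a, dg(x₀ − λ(x₀)a)⟩ ≠ 0` at a point `x₀ ∈ U`, then
`dλ(x₀)` lies in the kernel of the skew-symmetric bilinear form `𝒜_{x₀} − λ(x₀)𝒜_a`
on `𝔤`, i.e. `⟨x₀ − λ(x₀)a, [dλ(x₀), η]⟩ = 0` for every `η ∈ 𝔤`. -/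
theorem root_of_semiInvariant_dl_in_kernel
    {L : Type*} [NormedAddCommGroup L] [NormedSpace ℂ L] [FiniteDimensional ℂ L]
    (B : L →ₗ[ℂ] L →ₗ[ℂ] L) (hB : IsLieBracket L B)
    (g : (L →L[ℂ] ℂ) → ℂ) (χ : L →L[ℂ] ℂ)
    (hpoly : IsPolyFun L g) (hg0 : g ≠ 0)
    (dg : (L →L[ℂ] ℂ) → L) (hdg : RepDeriv L g dg)
    (hsemi : ∀ (ξ : L) (x : L →L[ℂ] ℂ), x (B ξ (dg x)) = χ ξ * g x)
    (a : L →L[ℂ] ℂ)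
    (U : Set (L →L[ℂ] ℂ)) (hU : IsOpen U)
    (lam : (L →L[ℂ] ℂ) → ℂ) (hlam : AnalyticOnNhd ℂ lam U)
    (hroot : ∀ x ∈ U, g (x - lam x • a) = 0)
    (x₀ : L →L[ℂ] ℂ) (hx₀ : x₀ ∈ U)
    (hnd : a (dg (x₀ - lam x₀ • a)) ≠ 0)
    (dl : L)
    (hdl : ∀ v : L →L[ℂ] ℂ, fderiv ℂ lam x₀ v = v dl) :
    ∀ η : L, (x₀ - lam x₀ • a) (B dl η) = 0 :=
  fun η ↦ LinearMap.congr_fun (root_of_semiInvariant_dl_in_kernel_general hB.1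
    (hasFDerivAt_apply_of_fderiv_eq hpoly.differentiable.differentiableAt (hdg _)) (hsemi · _)
    (hasFDerivAt_apply_of_fderiv_eq (hlam x₀ hx₀).differentiableAt hdl)
    (eventually_of_mem (hU.mem_nhds hx₀) hroot) hnd) η
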